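/- Objective bound under a fixed indicator for the cardinality-constrained relaxation: suppose (x*, t*, z*) is an optimal solution attaining η_CC and let α and δ be defined from x*. Fix an index j. If δ_j ≤ δ_{[k+1]}, then every (x, t, z) feasible for the conic relaxation (t_l ≥ 0, z ∈ [0,1]^n, Σ_{l=1}^n z_l ≤ k, x_l² ≤ z_l t_l for all l) with z_j = 1 satisfies L(x) + (1/γ) Σ_{l=1}^n t_l ≥ η_CC + γ(δ_{[k]} − δ_j). Symmetrically, if δ_j ≥ δ_{[k]}, then every such feasible (x, t, z) with z_j = 0 satisfies L(x) + (1/γ) Σ_{l=1}^n t_l ≥ η_CC + γ(δ_j − δ_{[k+1]}). -/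

import Mathlib

/-- The logistic loss `L(x) = (1/m) ∑ᵢ log (1 + exp (-yᵢ (A x)ᵢ))`. -/
noncomputable def logLoss (m n : ℕ) (A : Fin m → Fin n → ℝ) (y : Fin m → ℝ)
    (x : Fin n → ℝ) : ℝ :=
  (1 / (m : ℝ)) * ∑ i, Real.log (1 + Real.exp (-(y i) * ∑ j, A i j * x j))

/-- Tangent inequality for the scalar logistic loss. -/
lemma logistic_tangent (u v : ℝ) :
    Real.log (1 + Real.exp (-u)) - (v - u) / (1 + Real.exp u) ≤ Real.log (1 + Real.exp (-v)) := by
  have hu := Real.exp_pos u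
  have hv := Real.exp_pos v
  have hp : 0 < 1 + Real.exp u := by positivity
  have key := convexOn_exp.2 (Set.mem_univ (u - v)) (Set.mem_univ 0)
    (show 0 ≤ 1 / (1 + Real.exp u) by positivity)
    (show 0 ≤ Real.exp u / (1 + Real.exp u) by positivity) (by field_simp)
  simp only [smul_eq_mul, mul_zero, add_zero, Real.exp_zero, mul_one] at key
  have e1 : 1 / (1 + Real.exp u) * Real.exp (u - v) + Real.exp u / (1 + Real.exp u)
      = (1 + Real.exp (-v)) / (1 + Real.exp (-u)) := by
    rw [Real.exp_sub, Real.exp_neg, Real.exp_neg]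
    field_simp
    ring
  rw [e1] at key
  have h2 := Real.log_le_log (Real.exp_pos _) key
  rw [Real.log_exp, Real.log_div (by positivity) (by positivity)] at h2
  have : 1 / (1 + Real.exp u) * (u - v) = - ((v - u) / (1 + Real.exp u)) := by ring
  linarith

/-- Negative gradient of the loss. -/
noncomputable def negGrad (m n : ℕ) (A : Fin m → Fin n → ℝ) (y : Fin m → ℝ)
    (x : Fin n → ℝ) (l : Fin n) : ℝ :=
  ∑ i, y i / ((m : ℝ) * (1 + Real.exp (y i * ∑ j, A i j * x j))) * A i l

lemma negGrad_dot (m n : ℕ) (A : Fin m → Fin n → ℝ) (y : Fin m → ℝ) (x d : Fin n → ℝ) :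
    ∑ l, negGrad m n A y x l * d l =
      (1 / (m : ℝ)) * ∑ i, (y i * ∑ l, A i l * d l) / (1 + Real.exp (y i * ∑ j, A i j * x j)) := by
  simp only [negGrad, Finset.sum_mul, Finset.mul_sum, Finset.sum_div]
  rw [Finset.sum_comm]
  refine Finset.sum_congr rfl fun i _ => Finset.sum_congr rfl fun l _ => ?_
  rw [div_mul_eq_mul_div, div_mul_eq_mul_div, div_mul_div_comm]
  congr 1
  ring

lemma logLoss_tangent (m n : ℕ) (A : Fin m → Fin n → ℝ) (y : Fin m → ℝ) (x x' : Fin n → ℝ) :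
    logLoss m n A y x - ∑ l, negGrad m n A y x l * (x' l - x l) ≤ logLoss m n A y x' := by
  rw [negGrad_dot, logLoss, logLoss, ← mul_sub, ← Finset.sum_sub_distrib]
  refine mul_le_mul_of_nonneg_left (Finset.sum_le_sum fun i _ => ?_) (by positivity)
  have := logistic_tangent (y i * ∑ j, A i j * x j) (y i * ∑ j, A i j * x' j)
  have e : y i * ∑ l, A i l * (x' l - x l)
      = y i * ∑ j, A i j * x' j - y i * ∑ j, A i j * x j := by
    simp only [mul_sub, Finset.sum_sub_distrib]
  rw [e, neg_mul, neg_mul]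
  exact this

lemma negGrad_continuous (m n : ℕ) (hm : 0 < m) (A : Fin m → Fin n → ℝ) (y : Fin m → ℝ)
    (l : Fin n) : Continuous fun x => negGrad m n A y x l := by
  unfold negGrad
  refine continuous_finsetSum _ fun i _ => ?_
  refine Continuous.mul (Continuous.div (by fun_prop) (by fun_prop) fun x => ?_) (by fun_prop)
  have : (0 : ℝ) < m := by exact_mod_cast hm
  positivity

lemma cone_convex {x z t x' z' t' s : ℝ} (hz : 0 ≤ z) (ht : 0 ≤ t) (hz' : 0 ≤ z') (ht' : 0 ≤ t')
    (h : x ^ 2 ≤ z * t) (h' : x' ^ 2 ≤ z' * t') (h0 : 0 ≤ s) (h1 : s ≤ 1) :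
    (x + s * (x' - x)) ^ 2 ≤ (z + s * (z' - z)) * (t + s * (t' - t)) := by
  have c : x * x' * 2 ≤ z * t' + z' * t := by
    apply abs_le_of_sq_le_sq' _ (by positivity) |>.2
    have := mul_le_mul h h' (sq_nonneg _) (by positivity)
    nlinarith [sq_nonneg (z * t' - z' * t)]
  have hs : 0 ≤ s * (1 - s) := mul_nonneg h0 (by linarith)
  nlinarith [mul_le_mul_of_nonneg_left c hs, mul_le_mul_of_nonneg_left h (sq_nonneg (1 - s)),
    mul_le_mul_of_nonneg_left h' (sq_nonneg s)]

lemma cone_bound {x z t g γ : ℝ} (hγ : 0 < γ) (hz : 0 ≤ z) (ht : 0 ≤ t) (h : x ^ 2 ≤ z * t) :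
    -(γ * ((1 / 4 * g ^ 2) * z)) ≤ 1 / γ * t - g * x := by
  have c : g * x ≤ 1 / γ * t + γ * ((1 / 4 * g ^ 2) * z) := by
    apply abs_le_of_sq_le_sq' _ (by positivity) |>.2
    have e : 4 * (1 / γ * t) * (γ * ((1 / 4 * g ^ 2) * z)) = g ^ 2 * (z * t) := by
      field_simp
    nlinarith [sq_nonneg (1 / γ * t - γ * ((1 / 4 * g ^ 2) * z)),
      mul_le_mul_of_nonneg_left h (sq_nonneg g)]
  linarith

/-- Combinatorial bound. -/
lemma threshold_sum {n : ℕ} (k : ℕ) (δ z : Fin n → ℝ) (S : Finset (Fin n)) (hS : S.card = k)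
    (θ : ℝ) (hθ : 0 ≤ θ) (h1 : ∀ l ∈ S, θ ≤ δ l) (h2 : ∀ l, l ∉ S → δ l ≤ θ)
    (hz : ∀ l, 0 ≤ z l ∧ z l ≤ 1) (hk : ∑ l, z l ≤ (k : ℝ)) (j : Fin n) :
    ∑ l, δ l * z l ≤ ∑ l ∈ S, δ l + (δ j - θ) * z j - max (δ j - θ) 0 := by
  have a1 : ∑ l, max (δ l - θ) 0 = ∑ l ∈ S, δ l - k * θ := by
    rw [← Finset.sum_subset (Finset.subset_univ S)
      (fun l _ hl => max_eq_right (by linarith [h2 l hl]))]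
    rw [Finset.sum_congr rfl fun l hl => max_eq_left (by linarith [h1 l hl]),
      Finset.sum_sub_distrib]
    simp [hS]
  have a2 : max (δ j - θ) 0 - (δ j - θ) * z j ≤ ∑ l, (max (δ l - θ) 0 - (δ l - θ) * z l) := by
    refine Finset.single_le_sum (f := fun l => max (δ l - θ) 0 - (δ l - θ) * z l)
      (fun l _ => ?_) (Finset.mem_univ j)
    have := hz l
    rcases le_total (δ l - θ) 0 with h | h
    · simp only [max_eq_right h]; nlinarith
    · simp only [max_eq_left h]; nlinarith
  have a3 : ∑ l, (δ l - θ) * z l = ∑ l, δ l * z l - θ * ∑ l, z l := by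
    simp only [sub_mul, Finset.sum_sub_distrib, Finset.mul_sum]
  rw [Finset.sum_sub_distrib, a1, a3] at a2
  nlinarith [mul_le_mul_of_nonneg_left hk hθ]

/-- Objective bound under a fixed indicator for the cardinality-constrained relaxation:
if `(xs, ts, zs)` is an optimal solution attaining `ηCC` and `α`, `δ` are defined from
`xs` (the permutation `σ` sorts `δ` in nonincreasing order, so `δ (σ ⟨k-1,_⟩) = δ_[k]`
and `δ (σ ⟨k,_⟩) = δ_[k+1]`), then for a fixed index `j`: if `δ_j ≤ δ_[k+1]`, every
feasible `(x, t, z)` of the conic relaxation with `z j = 1` has objective at least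
`ηCC + γ (δ_[k] - δ_j)`; if `δ_j ≥ δ_[k]`, every feasible `(x, t, z)` with `z j = 0`
has objective at least `ηCC + γ (δ_j - δ_[k+1])`. -/
theorem objective_bound_fixed_indicator_CARD
    (m n : ℕ) (hm : 0 < m) (hn : 0 < n)
    (A : Fin m → Fin n → ℝ) (y : Fin m → ℝ) (hy : ∀ i, y i = 1 ∨ y i = -1)
    (γ : ℝ) (hγ : 0 < γ)
    (k : ℕ) (hk : 1 ≤ k) (hkn : k < n)
    -- (xs, ts, zs) is an optimal solution of the conic relaxation attaining ηCC
    (xs ts zs : Fin n → ℝ)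
    (hts : ∀ l, 0 ≤ ts l) (hzs : ∀ l, 0 ≤ zs l ∧ zs l ≤ 1)
    (hcard_s : ∑ l, zs l ≤ (k : ℝ))
    (hcone_s : ∀ l, (xs l) ^ 2 ≤ zs l * ts l)
    (hopt : ∀ x t z : Fin n → ℝ, (∀ l, 0 ≤ t l) → (∀ l, 0 ≤ z l ∧ z l ≤ 1) →
      (∑ l, z l ≤ (k : ℝ)) → (∀ l, (x l) ^ 2 ≤ z l * t l) →
      logLoss m n A y xs + (1 / γ) * ∑ l, ts l ≤
        logLoss m n A y x + (1 / γ) * ∑ l, t l)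
    (ηCC : ℝ)
    (hηCC : ηCC = logLoss m n A y xs + (1 / γ) * ∑ l, ts l)
    -- dual quantities defined from xs
    (α : Fin m → ℝ)
    (hα : ∀ i, α i = y i / ((m : ℝ) * (1 + Real.exp (y i * ∑ j, A i j * xs j))))
    (δ : Fin n → ℝ)
    (hδ : ∀ l, δ l = (1 / 4) * (∑ i, α i * A i l) ^ 2)
    -- σ sorts δ in nonincreasing order
    (σ : Equiv.Perm (Fin n)) (hσ : ∀ i j : Fin n, i ≤ j → δ (σ j) ≤ δ (σ i))
    (j : Fin n) :
    (δ j ≤ δ (σ ⟨k, hkn⟩) →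
      ∀ x t z : Fin n → ℝ, (∀ l, 0 ≤ t l) → (∀ l, 0 ≤ z l ∧ z l ≤ 1) →
        (∑ l, z l ≤ (k : ℝ)) → (∀ l, (x l) ^ 2 ≤ z l * t l) → z j = 1 →
        ηCC + γ * (δ (σ ⟨k - 1, by omega⟩) - δ j) ≤
          logLoss m n A y x + (1 / γ) * ∑ l, t l) ∧
    (δ (σ ⟨k - 1, by omega⟩) ≤ δ j →
      ∀ x t z : Fin n → ℝ, (∀ l, 0 ≤ t l) → (∀ l, 0 ≤ z l ∧ z l ≤ 1) →
        (∑ l, z l ≤ (k : ℝ)) → (∀ l, (x l) ^ 2 ≤ z l * t l) → z j = 0 →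
        ηCC + γ * (δ j - δ (σ ⟨k, hkn⟩)) ≤
          logLoss m n A y x + (1 / γ) * ∑ l, t l) := by
  have hG : ∀ l, δ l = 1 / 4 * (negGrad m n A y xs l) ^ 2 := by
    intro l
    rw [hδ]; simp only [hα, negGrad]
  have hδ0 : ∀ l, 0 ≤ δ l := fun l => by rw [hδ]; positivity
  -- first order optimality
  have hfirst : ∀ x t z : Fin n → ℝ, (∀ l, 0 ≤ t l) → (∀ l, 0 ≤ z l ∧ z l ≤ 1) →
      (∑ l, z l ≤ (k : ℝ)) → (∀ l, (x l) ^ 2 ≤ z l * t l) →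
      ∑ l, negGrad m n A y xs l * (x l - xs l) ≤ (1 / γ) * (∑ l, t l - ∑ l, ts l) := by
    intro x t z ht hz hcard hcone
    let X : ℝ → Fin n → ℝ := fun s l => xs l + s * (x l - xs l)
    have hX0 : X 0 = xs := by funext l; simp [X]
    have hcont : Continuous fun s : ℝ => ∑ l, negGrad m n A y (X s) l * (x l - xs l) := by
      refine continuous_finsetSum _ fun l _ => Continuous.mul ?_ continuous_const
      exact (negGrad_continuous m n hm A y l).comp
        (continuous_pi fun l => by simp only [X]; fun_prop)
    have htend := (hcont.tendsto 0).mono_left (nhdsWithin_le_nhds (s := Set.Ioi (0 : ℝ)))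
    rw [hX0] at htend
    refine le_of_tendsto htend ?_
    filter_upwards [Ioo_mem_nhdsGT (show (0 : ℝ) < 1 by norm_num)] with s hs
    obtain ⟨hs0, hs1⟩ := hs
    have o := hopt (X s) (fun l => ts l + s * (t l - ts l)) (fun l => zs l + s * (z l - zs l))
      (fun l => by nlinarith [hts l, ht l]) (fun l => ⟨by nlinarith [hzs l, hz l],
        by nlinarith [hzs l, hz l]⟩)
      (by
        simp only [Finset.sum_add_distrib, ← Finset.mul_sum, Finset.sum_sub_distrib]
        nlinarith)
      (fun l => cone_convex (hzs l).1 (hts l) (hz l).1 (ht l) (hcone_s l) (hcone l) hs0.le hs1.le)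
    have tg := logLoss_tangent m n A y (X s) xs
    have e : ∑ l, negGrad m n A y (X s) l * (xs l - X s l)
        = - s * ∑ l, negGrad m n A y (X s) l * (x l - xs l) := by
      rw [Finset.mul_sum]
      exact Finset.sum_congr rfl fun l _ => by simp only [X]; ring
    rw [e] at tg
    simp only [Finset.sum_add_distrib, ← Finset.mul_sum, Finset.sum_sub_distrib, mul_add] at o
    refine le_of_mul_le_mul_left ?_ hs0
    nlinarith
  let S : Finset (Fin n) := (Finset.univ.filter fun i : Fin n => (i : ℕ) < k).map σ.toEmbedding
  have hScard : S.card = k := by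
    simp only [S, Finset.card_map]
    rw [Fin.card_filter_val_lt]
    omega
  have hmem : ∀ i : Fin n, σ i ∈ S ↔ (i : ℕ) < k := by
    intro i; simp [S]
  -- value bound
  have hval : ηCC ≤ logLoss m n A y xs + ∑ l, negGrad m n A y xs l * xs l
      - γ * ∑ l ∈ S, δ l := by
    have := hfirst (fun l => if l ∈ S then γ * negGrad m n A y xs l / 2 else 0)
      (fun l => if l ∈ S then (γ * negGrad m n A y xs l / 2) ^ 2 else 0)
      (fun l => if l ∈ S then 1 else 0)
      (fun l => by split_ifs <;> positivity)
      (fun l => by split_ifs <;> norm_num)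
      (by simp [hScard])
      (fun l => by split_ifs <;> simp)
    simp only [mul_sub, Finset.sum_sub_distrib, mul_ite, mul_zero, Finset.sum_ite_mem,
      Finset.univ_inter] at this
    have e : ∑ l ∈ S, negGrad m n A y xs l * (γ * negGrad m n A y xs l / 2)
        - 1 / γ * ∑ l ∈ S, (γ * negGrad m n A y xs l / 2) ^ 2 = γ * ∑ l ∈ S, δ l := by
      rw [Finset.mul_sum, Finset.mul_sum, ← Finset.sum_sub_distrib]
      refine Finset.sum_congr rfl fun l _ => ?_
      rw [hG]; field_simp; ring
    rw [hηCC]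
    linarith
  have hlow : ∀ x t z : Fin n → ℝ, (∀ l, 0 ≤ t l) → (∀ l, 0 ≤ z l ∧ z l ≤ 1) →
      (∀ l, (x l) ^ 2 ≤ z l * t l) →
      logLoss m n A y xs + ∑ l, negGrad m n A y xs l * xs l - γ * ∑ l, δ l * z l ≤
        logLoss m n A y x + (1 / γ) * ∑ l, t l := by
    intro x t z ht hz hcone
    have tg := logLoss_tangent m n A y xs x
    have b : ∑ l, -(γ * (δ l * z l)) ≤ ∑ l, (1 / γ * t l - negGrad m n A y xs l * x l) :=
      Finset.sum_le_sum fun l _ => by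
        rw [hG]; exact cone_bound hγ (hz l).1 (ht l) (hcone l)
    simp only [Finset.sum_neg_distrib, Finset.sum_sub_distrib, ← Finset.mul_sum, mul_sub] at b tg
    linarith
  have hthr : ∀ p : Fin n, (p : ℕ) = k - 1 ∨ (p : ℕ) = k →
      (∀ l ∈ S, δ (σ p) ≤ δ l) ∧ (∀ l, l ∉ S → δ l ≤ δ (σ p)) := by
    intro p hp
    constructor
    · intro l hl
      obtain ⟨i, rfl⟩ := σ.surjective l
      rw [hmem] at hl
      exact hσ _ _ (Fin.le_def.2 (by omega))
    · intro l hl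
      obtain ⟨i, rfl⟩ := σ.surjective l
      rw [hmem] at hl
      exact hσ _ _ (Fin.le_def.2 (by omega))
  constructor
  · intro _ x t z ht hz hcard hcone hzj
    obtain ⟨h1, h2⟩ := hthr ⟨k - 1, by omega⟩ (Or.inl rfl)
    have c := threshold_sum k δ z S hScard _ (hδ0 _) h1 h2 hz hcard j
    have l1 := hlow x t z ht hz hcone
    rw [hzj] at c
    have m0 := le_max_right (δ j - δ (σ ⟨k - 1, by omega⟩)) 0
    have c2 : ∑ l, δ l * z l ≤ ∑ l ∈ S, δ l - (δ (σ ⟨k - 1, by omega⟩) - δ j) := by linarith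
    have := mul_le_mul_of_nonneg_left c2 hγ.le
    rw [mul_sub γ (∑ l ∈ S, δ l)] at this
    linarith
  · intro _ x t z ht hz hcard hcone hzj
    obtain ⟨h1, h2⟩ := hthr ⟨k, hkn⟩ (Or.inr rfl)
    have c := threshold_sum k δ z S hScard _ (hδ0 _) h1 h2 hz hcard j
    have l1 := hlow x t z ht hz hcone
    rw [hzj] at c
    have m0 := le_max_left (δ j - δ (σ ⟨k, hkn⟩)) 0
    have c2 : ∑ l, δ l * z l ≤ ∑ l ∈ S, δ l - (δ j - δ (σ ⟨k, hkn⟩)) := by linarith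
    have := mul_le_mul_of_nonneg_left c2 hγ.le
    rw [mul_sub γ (∑ l ∈ S, δ l)] at this
    linarith
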